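/- Let $X \sim \mathcal{N}(0, I_d)$, and let $A = O + D$ be a symmetric $d \times d$ matrix where $D = \mathrm{diag}(\alpha)$ with $\alpha_i = A_{ii}$ and $O$ is the off-diagonal part with eigenvalues $\lambda = (\lambda_1, \ldots, \lambda_d)$. Then for all $t > 0$, $\mathbb{P}(X^T A X - \mathbb{E}[X^T A X] \geq t) \leq 2\exp\big(-\frac{t}{16}\min\{\frac{t}{2\|\alpha\|_2^2}, \frac{1}{\|\alpha\|_\infty}, \frac{t}{2\|\lambda\|_2^2}, \frac{1}{\|\lambda\|_\infty}\}\big)$. -/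

import Mathlib

open MeasureTheory Real ProbabilityTheory

/-!
Write `Xᵀ (diag α + O) X - tr (diag α + O)` as the sum of the centred forms of `diag α` and of `O`.
Rotating to an eigenbasis of `O` leaves the law of `X` unchanged, so each centred form is
distributed as `∑ i, c i * (X i ^ 2 - 1)`, with `c = α` or `c` the eigenvalues of `O`. The bound
`exp (-x - x ^ 2) ≤ 1 - x` on `[-1/2, 1/2]` makes `X i ^ 2 - 1` sub-exponential, hence also the
independent sum. The two sums are not independent of each other, so their Chernoff bounds at level
`t / 2` are combined by a union bound, which is where the factor `2` comes from.
-/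

section

open Matrix

lemma exp_neg_sub_sq_le_one_sub {x : ℝ} (hx : |x| ≤ 1 / 2) : exp (-x - x ^ 2) ≤ 1 - x := by
  obtain ⟨hx_lower, hx_upper⟩ := abs_le.mp hx
  rcases le_total 0 x with h_nonneg | h_nonpos
  · suffices 1 ≤ (1 - x) * exp (x + x ^ 2) by
      rwa [← neg_add', exp_neg, inv_le_iff_one_le_mul₀ (exp_pos _)]
    calc (1 : ℝ) ≤ (1 - x) * (1 + (x + x ^ 2) + (x + x ^ 2) ^ 2 / 2) := by
          have : 0 ≤ 1 - x - x ^ 2 - x ^ 3 := by nlinarith [pow_nonneg h_nonneg 3]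
          nlinarith [mul_nonneg (sq_nonneg x) this]
      _ ≤ (1 - x) * exp (x + x ^ 2) := by
          gcongr
          · linarith
          · exact quadratic_le_exp_of_nonneg (by positivity)
  · have h_exp : exp (-x - x ^ 2) - 1 - (-x - x ^ 2) ≤ (-x - x ^ 2) ^ 2 :=
      (le_abs_self _).trans <| abs_exp_sub_one_sub_id_le <| by
        rw [abs_le]
        constructor <;> nlinarith
    have : (1 + x) ^ 2 ≤ 1 := by nlinarith
    nlinarith [mul_nonneg (sq_nonneg x) (sub_nonneg.2 this)]

/-- A random variable is sub-exponential with variance proxy `v` and scale `b` if its moment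
generating function is at most that of a centred Gaussian of variance `v` on the interval
`|t| ≤ 1 / b`. The interval is encoded as `b * |t| ≤ 1`, so that `b = 0` imposes the bound for
all `t`. -/
structure HasSubexponentialMGF {Ω : Type*} [MeasurableSpace Ω] (X : Ω → ℝ) (v b : ℝ)
    (μ : Measure Ω) : Prop where
  integrable_exp_mul : ∀ t : ℝ, b * |t| ≤ 1 → Integrable (fun ω ↦ exp (t * X ω)) μ
  mgf_le : ∀ t : ℝ, b * |t| ≤ 1 → mgf X μ t ≤ exp (v * t ^ 2 / 2)

namespace HasSubexponentialMGF

variable {Ω Ω' : Type*} [MeasurableSpace Ω] [MeasurableSpace Ω'] {μ : Measure Ω} {μ' : Measure Ω'}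
  {X Y : Ω → ℝ} {v w b c : ℝ}

lemma mono_scale (hX : HasSubexponentialMGF X v b μ) (hbc : b ≤ c) :
    HasSubexponentialMGF X v c μ where
  integrable_exp_mul t ht :=
    hX.integrable_exp_mul t <| (mul_le_mul_of_nonneg_right hbc (abs_nonneg t)).trans ht
  mgf_le t ht := hX.mgf_le t <| (mul_le_mul_of_nonneg_right hbc (abs_nonneg t)).trans ht

lemma const_mul (hX : HasSubexponentialMGF X v b μ) (r : ℝ) :
    HasSubexponentialMGF (fun ω ↦ r * X ω) (v * r ^ 2) (b * |r|) μ where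
  integrable_exp_mul t ht := by
    simpa only [mul_comm t r, mul_assoc, mul_left_comm t r] using
      hX.integrable_exp_mul (r * t) (by rwa [abs_mul, ← mul_assoc])
  mgf_le t ht := by
    rw [mgf_const_mul, mul_assoc, ← mul_pow]
    exact hX.mgf_le (r * t) (by rwa [abs_mul, ← mul_assoc])

lemma comp_measurePreserving {f : Ω' → Ω} (hX : HasSubexponentialMGF X v b μ)
    (hf : MeasurePreserving f μ' μ) : HasSubexponentialMGF (X ∘ f) v b μ' where
  integrable_exp_mul t ht := hf.integrable_comp_of_integrable (hX.integrable_exp_mul t ht)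
  mgf_le t ht := by
    rw [← mgf_map hf.aemeasurable, hf.map_eq]
    · exact hX.mgf_le t ht
    · rw [hf.map_eq]
      exact (hX.integrable_exp_mul t ht).aestronglyMeasurable

lemma sum_of_iIndepFun {ι : Type*} {X : ι → Ω → ℝ} {v : ι → ℝ} {s : Finset ι}
    (h_indep : iIndepFun X μ) (h_meas : ∀ i, Measurable (X i))
    (hX : ∀ i ∈ s, HasSubexponentialMGF (X i) (v i) b μ) :
    HasSubexponentialMGF (∑ i ∈ s, X i) (∑ i ∈ s, v i) b μ where
  integrable_exp_mul t ht :=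
    have := h_indep.isProbabilityMeasure
    h_indep.integrable_exp_mul_sum h_meas fun i hi ↦ (hX i hi).integrable_exp_mul t ht
  mgf_le t ht := by
    rw [h_indep.mgf_sum h_meas, Finset.sum_mul, Finset.sum_div, exp_sum]
    exact Finset.prod_le_prod (fun _ _ ↦ mgf_nonneg) fun i hi ↦ (hX i hi).mgf_le t ht

/-- Junk values only weaken the bound: if `v = 0` or `b = 0` its right-hand side is `1`. -/
lemma measureReal_ge_le [IsFiniteMeasure μ] (hX : HasSubexponentialMGF X v b μ) (hv : 0 ≤ v)
    (hb : 0 ≤ b) {ε : ℝ} (hε : 0 ≤ ε) :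
    μ.real {ω | ε ≤ X ω} ≤ exp (-(ε / 2) * min (ε / v) (1 / b)) := by
  set t := min (ε / v) (1 / b)
  have ht : 0 ≤ t := by positivity
  have htv : t * v ≤ ε := mul_le_of_le_div₀ hε hv (min_le_left _ _)
  have hbt : b * |t| ≤ 1 := by
    rw [abs_of_nonneg ht, mul_comm]
    exact mul_le_of_le_div₀ zero_le_one hb (min_le_right _ _)
  calc μ.real {ω | ε ≤ X ω} ≤ exp (-t * ε) * mgf X μ t :=
        measure_ge_le_exp_mul_mgf ε ht (hX.integrable_exp_mul t hbt)
    _ ≤ exp (-t * ε) * exp (v * t ^ 2 / 2) := by gcongr; exact hX.mgf_le t hbt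
    _ ≤ exp (-(ε / 2) * t) := by
        rw [← exp_add]
        gcongr
        nlinarith [mul_le_mul_of_nonneg_right htv ht]

lemma measureReal_add_ge_le [IsFiniteMeasure μ] (hX : HasSubexponentialMGF X v b μ)
    (hY : HasSubexponentialMGF Y w c μ) (hv : 0 ≤ v) (hb : 0 ≤ b) (hw : 0 ≤ w) (hc : 0 ≤ c)
    {ε : ℝ} (hε : 0 ≤ ε) :
    μ.real {ω | ε ≤ X ω + Y ω} ≤
      2 * exp (-(ε / 4) * min (min (ε / (2 * v)) (1 / b)) (min (ε / (2 * w)) (1 / c))) := by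
  set m := min (min (ε / (2 * v)) (1 / b)) (min (ε / (2 * w)) (1 / c))
  have hm_left : m ≤ min (ε / 2 / v) (1 / b) := by rw [div_div]; exact min_le_left _ _
  have hm_right : m ≤ min (ε / 2 / w) (1 / c) := by rw [div_div]; exact min_le_right _ _
  have h_split : {ω | ε ≤ X ω + Y ω} ⊆ {ω | ε / 2 ≤ X ω} ∪ {ω | ε / 2 ≤ Y ω} := by
    intro ω (hω : ε ≤ X ω + Y ω)
    by_contra! h
    simp only [Set.mem_union, Set.mem_ofPred_eq, not_or, not_le] at h
    linarith
  calc μ.real {ω | ε ≤ X ω + Y ω}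
      ≤ μ.real {ω | ε / 2 ≤ X ω} + μ.real {ω | ε / 2 ≤ Y ω} :=
        (measureReal_mono h_split).trans (measureReal_union_le _ _)
    _ ≤ exp (-(ε / 2 / 2) * min (ε / 2 / v) (1 / b)) +
          exp (-(ε / 2 / 2) * min (ε / 2 / w) (1 / c)) := by
        gcongr
        · exact hX.measureReal_ge_le hv hb (by positivity)
        · exact hY.measureReal_ge_le hw hc (by positivity)
    _ ≤ exp (-(ε / 2 / 2) * m) + exp (-(ε / 2 / 2) * m) := by
        simp only [neg_mul]
        gcongr
    _ = 2 * exp (-(ε / 4) * m) := by ring_nf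

end HasSubexponentialMGF

/-- If `1 ≤ 2 * u * v` then the integrand is not integrable and both sides take the junk value
`0`. -/
lemma integral_exp_mul_sq_gaussianReal (v : NNReal) (u : ℝ) :
    ∫ x, exp (u * x ^ 2) ∂(gaussianReal 0 v) = (√(1 - 2 * u * v))⁻¹ := by
  rcases eq_or_ne v 0 with rfl | hv
  · simp
  have h_density (x : ℝ) : gaussianPDFReal 0 v x • exp (u * x ^ 2) =
      (√(2 * π * v))⁻¹ * exp (-(1 / (2 * v) - u) * x ^ 2) := by
    rw [gaussianPDFReal, smul_eq_mul, mul_assoc, ← exp_add]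
    congr 2
    field
  simp_rw [integral_gaussianReal_eq_integral_smul hv, h_density]
  rw [integral_const_mul, integral_gaussian, ← sqrt_inv, ← sqrt_inv, ← sqrt_mul (by positivity)]
  congr 1
  rw [show 1 / (2 * v) - u = (1 - 2 * u * v) / (2 * v) by field]
  field

lemma mgf_sq_sub_one_gaussianReal (t : ℝ) :
    mgf (fun x ↦ x ^ 2 - 1) (gaussianReal 0 1) t = exp (-t) * (√(1 - 2 * t))⁻¹ := by
  have h_exp (x : ℝ) : exp (t * (x ^ 2 - 1)) = exp (-t) * exp (t * x ^ 2) := by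
    rw [← exp_add]
    ring_nf
  simp_rw [mgf, h_exp, integral_const_mul]
  rw [integral_exp_mul_sq_gaussianReal, NNReal.coe_one, mul_one]

lemma hasSubexponentialMGF_sq_sub_one_gaussianReal :
    HasSubexponentialMGF (fun x ↦ x ^ 2 - 1) 4 4 (gaussianReal 0 1) where
  integrable_exp_mul t ht := by
    have h_pos : 0 < 1 - 2 * t := by linarith [le_abs_self t]
    rw [← mgf_pos_iff, mgf_sq_sub_one_gaussianReal]
    positivity
  mgf_le t ht := by
    have h_abs : |2 * t| ≤ 1 / 2 := by
      rw [abs_mul, abs_two]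
      linarith
    have h_sqrt : exp (-t - 2 * t ^ 2) ≤ √(1 - 2 * t) := by
      apply le_sqrt_of_sq_le
      convert exp_neg_sub_sq_le_one_sub h_abs using 1
      rw [← exp_nat_mul]
      push_cast
      ring_nf
    calc mgf (fun x ↦ x ^ 2 - 1) (gaussianReal 0 1) t = exp (-t) * (√(1 - 2 * t))⁻¹ :=
          mgf_sq_sub_one_gaussianReal t
      _ ≤ exp (-t) * (exp (-t - 2 * t ^ 2))⁻¹ := by gcongr
      _ = exp (4 * t ^ 2 / 2) := by
          rw [← exp_neg, ← exp_add]
          ring_nf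

variable {ι : Type*} [Fintype ι]

lemma integral_eval_mul_eval_pi [DecidableEq ι] {μ : ι → Measure ℝ}
    [∀ i, IsProbabilityMeasure (μ i)] (h_mean : ∀ i, ∫ x, x ∂μ i = 0) (i j : ι) :
    ∫ x, x i * x j ∂(Measure.pi μ) = if i = j then Var[id; μ i] else 0 := by
  have h_law (k : ι) : HasLaw (fun x : ι → ℝ ↦ x k) (μ k) (Measure.pi μ) :=
    (measurePreserving_eval μ k).hasLaw
  have h_eval_mean (k : ι) : ∫ x, x k ∂(Measure.pi μ) = 0 := (h_law k).integral_eq.trans (h_mean k)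
  split_ifs with hij
  · subst hij
    rw [← (h_law i).variance_eq,
      variance_of_integral_eq_zero (h_law i).aemeasurable (h_eval_mean i)]
    simp only [← sq]
  · have h_indep := (iIndepFun_pi (μ := μ) (X := fun _ x ↦ x) fun _ ↦ by fun_prop).indepFun hij
    rw [h_indep.integral_fun_mul_eq_mul_integral (h_law i).aemeasurable.aestronglyMeasurable
      (h_law j).aemeasurable.aestronglyMeasurable, h_eval_mean, zero_mul]

lemma dotProduct_mulVec_self_eq_sum {R : Type*} [CommSemiring R] (A : Matrix ι ι R) (x : ι → R) :
    x ⬝ᵥ A *ᵥ x = ∑ i, ∑ j, A i j * x i * x j := by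
  simp_rw [dotProduct, mulVec, dotProduct, Finset.mul_sum, mul_left_comm, ← mul_assoc]

lemma integral_dotProduct_mulVec_pi {μ : ι → Measure ℝ}
    [∀ i, IsProbabilityMeasure (μ i)] (h_memLp : ∀ i, MemLp id 2 (μ i))
    (h_mean : ∀ i, ∫ x, x ∂μ i = 0) (A : Matrix ι ι ℝ) :
    ∫ x, x ⬝ᵥ A *ᵥ x ∂(Measure.pi μ) = ∑ i, A i i * Var[id; μ i] := by
  classical
  have h_eval (i : ι) : MemLp (fun x : ι → ℝ ↦ x i) 2 (Measure.pi μ) :=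
    (h_memLp i).comp_measurePreserving (measurePreserving_eval μ i)
  have h_int (i j : ι) : Integrable (fun x ↦ A i j * (x i * x j)) (Measure.pi μ) :=
    ((h_eval i).integrable_mul (h_eval j)).const_mul _
  simp_rw [dotProduct_mulVec_self_eq_sum, mul_assoc]
  rw [integral_finsetSum _ fun i _ ↦ integrable_finsetSum _ fun j _ ↦ h_int i j]
  simp_rw [integral_finsetSum _ fun j _ ↦ h_int _ j, integral_const_mul,
    integral_eval_mul_eval_pi h_mean, mul_ite, mul_zero, Finset.sum_ite_eq, Finset.mem_univ,
    if_true]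

lemma integral_dotProduct_mulVec_pi_gaussianReal (A : Matrix ι ι ℝ) :
    ∫ x, x ⬝ᵥ A *ᵥ x ∂(Measure.pi fun _ ↦ gaussianReal 0 1) = A.trace := by
  rw [integral_dotProduct_mulVec_pi (fun _ ↦ memLp_id_gaussianReal 2)
    (fun _ ↦ integral_id_gaussianReal)]
  simp only [variance_id_gaussianReal, NNReal.coe_one, mul_one, trace, diag_apply]

variable [DecidableEq ι]

lemma measurePreserving_mulVec_pi_gaussianReal (U : orthogonalGroup ι ℝ) :
    MeasurePreserving (fun x ↦ U.1 *ᵥ x) (Measure.pi fun _ ↦ gaussianReal 0 1)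
      (Measure.pi fun _ ↦ gaussianReal 0 1) := by
  let e : EuclideanSpace ℝ ι ≃ₗᵢ[ℝ] EuclideanSpace ℝ ι :=
    Unitary.linearIsometryEquiv ⟨toEuclideanCLM (𝕜 := ℝ) U.1, Unitary.map_mem _ U.2⟩
  have h_toLp : MeasurePreserving (WithLp.toLp 2) (Measure.pi fun _ : ι ↦ gaussianReal 0 1)
      (stdGaussian (EuclideanSpace ℝ ι)) := ⟨by fun_prop, map_pi_eq_stdGaussian⟩
  have h_ofLp : MeasurePreserving WithLp.ofLp (stdGaussian (EuclideanSpace ℝ ι))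
      (Measure.pi fun _ ↦ gaussianReal 0 1) :=
    h_toLp.symm (MeasurableEquiv.toLp 2 (ι → ℝ))
  have h_e : MeasurePreserving e (stdGaussian (EuclideanSpace ℝ ι)) (stdGaussian _) :=
    ⟨by fun_prop, stdGaussian_map e⟩
  exact h_ofLp.comp (h_e.comp h_toLp)

lemma hasSubexponentialMGF_diagonal_pi_gaussianReal (α : ι → ℝ) :
    HasSubexponentialMGF (fun x ↦ x ⬝ᵥ diagonal α *ᵥ x - (diagonal α).trace)
      (4 * ∑ i, α i ^ 2) (4 * ⨆ i, |α i|) (Measure.pi fun _ ↦ gaussianReal 0 1) := by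
  have h_indep : iIndepFun (fun i (x : ι → ℝ) ↦ α i * (x i ^ 2 - 1))
      (Measure.pi fun _ ↦ gaussianReal 0 1) :=
    iIndepFun_pi (X := fun i y ↦ α i * (y ^ 2 - 1)) fun i ↦ by fun_prop
  have h_coord (i : ι) : HasSubexponentialMGF (fun x : ι → ℝ ↦ α i * (x i ^ 2 - 1)) (4 * α i ^ 2)
      (4 * ⨆ i, |α i|) (Measure.pi fun _ ↦ gaussianReal 0 1) :=
    ((hasSubexponentialMGF_sq_sub_one_gaussianReal.comp_measurePreserving
      (measurePreserving_eval _ i)).const_mul (α i)).mono_scale <| by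
        gcongr; exact le_ciSup (f := fun i ↦ |α i|) (Finite.bddAbove_range _) i
  convert HasSubexponentialMGF.sum_of_iIndepFun h_indep (fun i ↦ by fun_prop)
    (s := Finset.univ) (fun i _ ↦ h_coord i) using 1
  · ext x
    simp only [dotProduct, mulVec_diagonal, trace_diagonal, Finset.sum_apply, mul_sub, mul_one,
      Finset.sum_sub_distrib, mul_left_comm (x _), sq]
  · rw [Finset.mul_sum]

lemma hasSubexponentialMGF_dotProduct_mulVec_pi_gaussianReal {B : Matrix ι ι ℝ}
    (hB : B.IsHermitian) :
    HasSubexponentialMGF (fun x ↦ x ⬝ᵥ B *ᵥ x - B.trace) (4 * ∑ i, hB.eigenvalues i ^ 2)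
      (4 * ⨆ i, |hB.eigenvalues i|) (Measure.pi fun _ ↦ gaussianReal 0 1) := by
  have h_form (x : ι → ℝ) :
      (star hB.eigenvectorUnitary.1 *ᵥ x) ⬝ᵥ
        diagonal hB.eigenvalues *ᵥ (star hB.eigenvectorUnitary.1 *ᵥ x) = x ⬝ᵥ B *ᵥ x := by
    have h_spectral := hB.spectral_theorem
    rw [Unitary.conjStarAlgAut_apply] at h_spectral
    conv_rhs => rw [h_spectral]
    rw [mulVec_mulVec, star_eq_conjTranspose, conjTranspose_eq_transpose_of_trivial,
      mulVec_transpose, ← dotProduct_mulVec, mulVec_mulVec, Matrix.mul_assoc]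
    rfl
  have h_trace : (diagonal hB.eigenvalues).trace = B.trace := by
    rw [hB.trace_eq_sum_eigenvalues, trace_diagonal]; rfl
  have h := (hasSubexponentialMGF_diagonal_pi_gaussianReal hB.eigenvalues).comp_measurePreserving
    (measurePreserving_mulVec_pi_gaussianReal (star hB.eigenvectorUnitary))
  simpa only [Function.comp_def, Unitary.coe_star, h_form, h_trace] using h

theorem stmt_7_general {ι : Type*} [Fintype ι] [DecidableEq ι] (α : ι → ℝ) {O : Matrix ι ι ℝ}
    (hO : O.IsHermitian) {t : ℝ} (ht : 0 ≤ t) :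
    (Measure.pi fun _ : ι ↦ gaussianReal 0 1)
        {x | x ⬝ᵥ (diagonal α + O) *ᵥ x -
          (∫ y, y ⬝ᵥ (diagonal α + O) *ᵥ y ∂(Measure.pi fun _ : ι ↦ gaussianReal 0 1)) ≥ t}
      ≤ ENNReal.ofReal (2 * exp (-(t / 16) *
          min (min (t / (2 * ∑ i, α i ^ 2)) (1 / ⨆ i, |α i|))
              (min (t / (2 * ∑ i, hO.eigenvalues i ^ 2)) (1 / ⨆ i, |hO.eigenvalues i|)))) := by
  have h_tail := (hasSubexponentialMGF_diagonal_pi_gaussianReal α).measureReal_add_ge_le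
    (hasSubexponentialMGF_dotProduct_mulVec_pi_gaussianReal hO) (by positivity)
    (mul_nonneg zero_le_four (iSup_nonneg fun _ ↦ abs_nonneg _)) (by positivity)
    (mul_nonneg zero_le_four (iSup_nonneg fun _ ↦ abs_nonneg _)) ht
  have h_rescale (a b : ℝ) :
      min (t / (2 * (4 * a))) (1 / (4 * b)) = min (t / (2 * a)) (1 / b) / 4 := by
    rw [← min_div_div_right (by norm_num), div_div, div_div]
    ring_nf
  rw [h_rescale, h_rescale, min_div_div_right (by norm_num)] at h_tail
  rw [integral_dotProduct_mulVec_pi_gaussianReal, ← ofReal_measureReal]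
  apply ENNReal.ofReal_le_ofReal
  convert h_tail using 2
  · simp only [add_mulVec, dotProduct_add, trace_add, add_sub_add_comm, ge_iff_le]
  · ring_nf

end

/-- Gaussian chaos (Hanson–Wright type) concentration for `XᵀAX` with
`X ~ N(0, I_d)`, in terms of the diagonal entries `α` of `A` and the
eigenvalues `λ` of the off-diagonal part `O = A - diag(α)`. -/
theorem stmt_7 (d : ℕ) (A : Matrix (Fin d) (Fin d) ℝ) (hA : A.IsSymm)
    (hO : (A - Matrix.diagonal fun i => A i i).IsHermitian) (t : ℝ) (ht : 0 < t) :
    (Measure.pi fun _ : Fin d => gaussianReal 0 1)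
        {x | (∑ i, ∑ j, A i j * x i * x j) -
              (∫ y : Fin d → ℝ, (∑ i, ∑ j, A i j * y i * y j)
                ∂(Measure.pi fun _ : Fin d => gaussianReal 0 1)) ≥ t}
      ≤ ENNReal.ofReal (2 * Real.exp (-(t / 16) *
          min (min (t / (2 * ∑ i, (A i i) ^ 2)) (1 / ⨆ i, |A i i|))
              (min (t / (2 * ∑ i, (hO.eigenvalues i) ^ 2)) (1 / ⨆ i, |hO.eigenvalues i|)))) := by
  simpa only [add_sub_cancel, dotProduct_mulVec_self_eq_sum] using
    stmt_7_general (fun i ↦ A i i) hO ht.le
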